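/- (ℬ, Δ, ε*) is a graded, connected, cocommutative, coassociative coalgebra: (Δ ⊗ id) ∘ Δ = (id ⊗ Δ) ∘ Δ; the flip map of ℬ ⊗ ℬ fixes Δ(x) for every x ∈ ℬ; (ε* ⊗ id) ∘ Δ = id = (id ⊗ ε*) ∘ Δ (identifying ℂ ⊗ ℬ and ℬ ⊗ ℂ with ℬ); and Δ respects the grading of ℬ by ω: for every B-diagram G, each term G[I] ⊗ G[∁I] of Δ(G) satisfies ω(G[I]) + ω(G[∁I]) = ω(G). -/

import Mathlib

open scoped BigOperators

structure BD where
  lam : List ℕ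
  up : Finset ℕ
  dn : Finset ℕ
  ed : Finset (ℕ × ℕ)
deriving DecidableEq

namespace BD

/-- number of vertices -/
def nv (G : BD) : ℕ := G.lam.length

/-- number of half-edges -/
def omega (G : BD) : ℕ := G.lam.sum

/-- the vertex to which a half-edge belongs -/
def v (G : BD) (k : ℕ) : ℕ :=
  (List.range G.lam.length).countP (fun i => (G.lam.take i).sum < k)

def Valid (G : BD) : Prop :=
  (∀ x ∈ G.lam, 0 < x) ∧
  G.up ⊆ Finset.Icc 1 G.omega ∧
  G.dn ⊆ Finset.Icc 1 G.omega ∧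
  (∀ p ∈ G.ed, p.1 ∈ G.up ∧ p.2 ∈ G.dn ∧ G.v p.1 < G.v p.2) ∧
  (∀ p ∈ G.ed, ∀ q ∈ G.ed, p.1 = q.1 → p = q) ∧
  (∀ p ∈ G.ed, ∀ q ∈ G.ed, p.2 = q.2 → p = q)

def eps : BD := ⟨[], ∅, ∅, ∅⟩

theorem eps_valid : eps.Valid := by
  refine ⟨?_, ?_, ?_, ?_, ?_, ?_⟩ <;> simp [eps, Valid, omega]

def HfUp (G : BD) : Finset ℕ := G.up \ G.ed.image Prod.fst
def HfDn (G : BD) : Finset ℕ := G.dn \ G.ed.image Prod.snd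
def hfUp (G : BD) : ℕ := G.HfUp.card
def hfDn (G : BD) : ℕ := G.HfDn.card
def hc (G : BD) : ℕ :=
  (G.omega - G.ed.card - G.hfUp) + (G.omega - G.ed.card - G.hfDn)

/-- composition of `G'` over `G` along a matching `s` -/
def comp (G G' : BD) (s : Finset (ℕ × ℕ)) : BD where
  lam := G.lam ++ G'.lam
  up := G.up ∪ G'.up.image (· + G.omega)
  dn := G.dn ∪ G'.dn.image (· + G.omega)
  ed := G.ed ∪ s.image (fun p => (p.1, p.2 + G.omega)) ∪
        G'.ed.image (fun p => (p.1 + G.omega, p.2 + G.omega))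

/-- `s` encodes a strictly increasing sequence `a₁ < ⋯ < a_k` of elements of `H_f↑(G)`
matched with pairwise distinct elements `b₁,…,b_k` of `H_f↓(G')`. -/
def Matching (G G' : BD) (s : Finset (ℕ × ℕ)) : Prop :=
  (∀ p ∈ s, p.1 ∈ G.HfUp ∧ p.2 ∈ G'.HfDn) ∧
  (∀ p ∈ s, ∀ q ∈ s, p.1 = q.1 → p = q) ∧
  (∀ p ∈ s, ∀ q ∈ s, p.2 = q.2 → p = q)

open scoped Classical in
noncomputable def matchings (G G' : BD) : Finset (Finset (ℕ × ℕ)) :=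
  (G.HfUp ×ˢ G'.HfDn).powerset.filter (fun s => Matching G G' s)

/-- juxtaposition -/
def juxt (G G' : BD) : BD := comp G G' ∅

def Indiv (G : BD) : Prop :=
  ∀ G₁ G₂ : BD, G₁.Valid → G₂.Valid → G = juxt G₁ G₂ → G₁ = G ∨ G₂ = G

/-- half-edges attached to the vertices in `I` -/
def HI (G : BD) (I : Finset ℕ) : Finset ℕ :=
  (Finset.Icc 1 G.omega).filter (fun k => G.v k ∈ I)

/-- the increasing relabelling bijection -/
def phi (G : BD) (I : Finset ℕ) (k : ℕ) : ℕ := ((G.HI I).filter (· ≤ k)).card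

/-- sub-B-diagram on the set of vertices `I` -/
def sub (G : BD) (I : Finset ℕ) : BD where
  lam := ((List.range G.lam.length).filter (fun i => i + 1 ∈ I)).map (fun i => G.lam.getD i 0)
  up := (G.up ∩ G.HI I).image (G.phi I)
  dn := (G.dn ∩ G.HI I).image (G.phi I)
  ed := (G.ed.filter (fun p => G.v p.1 ∈ I ∧ G.v p.2 ∈ I)).image
          (fun p => (G.phi I p.1, G.phi I p.2))

def Isolated (G : BD) (I : Finset ℕ) : Prop :=
  ∀ p ∈ G.ed, (G.v p.1 ∈ I ↔ G.v p.2 ∈ I)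

def Connected (G : BD) : Prop :=
  ∀ i j : ℕ, 1 ≤ i → i < j → j ≤ G.nv →
    ∃ (k : ℕ) (c : Fin (k + 1) → ℕ × ℕ),
      (∀ ℓ, c ℓ ∈ G.ed) ∧
      (i = G.v (c 0).1 ∨ i = G.v (c 0).2) ∧
      (j = G.v (c (Fin.last k)).1 ∨ j = G.v (c (Fin.last k)).2) ∧
      ∀ ℓ : Fin k,
        G.v (c ℓ.castSucc).1 = G.v (c ℓ.succ).1 ∨ G.v (c ℓ.castSucc).1 = G.v (c ℓ.succ).2 ∨
        G.v (c ℓ.castSucc).2 = G.v (c ℓ.succ).1 ∨ G.v (c ℓ.castSucc).2 = G.v (c ℓ.succ).2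

def IsConnComp (G : BD) (I : Finset ℕ) : Prop :=
  I ⊆ Finset.Icc 1 G.nv ∧ I.Nonempty ∧ (G.sub I).Connected ∧
  ∀ J : Finset ℕ, I ⊆ J → J ⊆ Finset.Icc 1 G.nv → (G.sub J).Connected → J = I

end BD

open scoped TensorProduct

/-- B-diagrams -/
abbrev BDiagram := {G : BD // G.Valid}

/-- the free `ℂ`-vector space on the set of B-diagrams -/
abbrev BSpace := BDiagram →₀ ℂ

open scoped Classical in
noncomputable def mkB (G : BD) : BSpace :=
  if h : G.Valid then Finsupp.single ⟨G, h⟩ 1 else 0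

noncomputable def unitB : BSpace := Finsupp.single ⟨BD.eps, BD.eps_valid⟩ 1

noncomputable def liftB {V : Type*} [AddCommMonoid V] [Module ℂ V] (f : BDiagram → V) :
    BSpace →ₗ[ℂ] V :=
  Finsupp.lsum ℂ fun A => LinearMap.toSpanSingleton ℂ V (f A)

noncomputable def mulfun (A B : BDiagram) : BSpace :=
  ∑ s ∈ BD.matchings A.1 B.1, mkB (BD.comp A.1 B.1 s)

/-- the product ⋆ of the algebra of B-diagrams, as a bilinear map -/
noncomputable def starB : BSpace →ₗ[ℂ] BSpace →ₗ[ℂ] BSpace :=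
  liftB fun A => liftB fun B => mulfun A B

open scoped Classical in
/-- the coproduct evaluated on a B-diagram -/
noncomputable def dfun (A : BDiagram) : BSpace ⊗[ℂ] BSpace :=
  ∑ I ∈ (Finset.Icc 1 A.1.nv).powerset.filter (fun I => A.1.Isolated I),
    mkB (A.1.sub I) ⊗ₜ[ℂ] mkB (A.1.sub (Finset.Icc 1 A.1.nv \ I))

/-- the coproduct Δ of ℬ -/
noncomputable def deltaL : BSpace →ₗ[ℂ] BSpace ⊗[ℂ] BSpace := liftB dfun

/-- the counit of ℬ -/
noncomputable def counitB : BSpace →ₗ[ℂ] ℂ :=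
  liftB fun A => if A.1 = BD.eps then (1 : ℂ) else 0

/-!
Relabelling the vertices of `I` or the half-edges attached to them is taking ranks: the vertex or
half-edge `a` of `G` becomes number `|{x ∈ X | x ≤ a}|`, where `X` is the set of retained vertices
or half-edges. Ranks compose, the rank relative to the image of `Y ⊆ X` of the rank relative to `X`
being the rank relative to `Y`, and `v` commutes with relabelling. Hence for `A ⊆ I`, taking in
`G[I]` the vertices that come from `A` gives `G[A]`. When `I` is isolated in `G`, the isolated sets
of `G[I]` come exactly from the isolated sets `A ⊆ I` of `G`, so that `Δ(G[I])` is the sum of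
`G[A] ⊗ G[I \ A]` over these `A`.

Since isolated sets are closed under union and difference, both sides of coassociativity are the
sum of `G[A] ⊗ G[B] ⊗ G[C]` over the ordered partitions of the vertices into three isolated sets.
Cocommutativity is the symmetry `I ↔ ∁I`. The counit kills every `G[I]` except the empty `G[∅]`,
whose partner is `G` itself.
-/

section RankIn

variable {α : Type*} [LinearOrder α]

/-- The rank of `a` relative to a finite set `X`: on `X` this is the increasing bijection onto
`{1, …, |X|}`, which is how sub-B-diagrams relabel both their half-edges and their vertices. -/
def rankIn (X : Finset α) (a : α) : ℕ := (X.filter (· ≤ a)).card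

theorem rankIn_mono (X : Finset α) : Monotone (rankIn X) := fun _ _ hab =>
  Finset.card_le_card (Finset.monotone_filter_right X fun _ _ h => h.trans hab)

theorem rankIn_lt_rankIn {X : Finset α} {a b : α} (hb : b ∈ X) (hab : a < b) :
    rankIn X a < rankIn X b := by
  refine Finset.card_lt_card (Finset.ssubset_iff_of_subset ?_ |>.2 ⟨b, ?_, ?_⟩)
  · exact Finset.monotone_filter_right X fun _ _ h => h.trans hab.le
  · simp [hb]
  · simp [hab]

theorem rankIn_strictMonoOn (X : Finset α) : StrictMonoOn (rankIn X) X :=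
  fun _ _ _ hb hab => rankIn_lt_rankIn hb hab

theorem rankIn_injOn (X : Finset α) : Set.InjOn (rankIn X) X := (rankIn_strictMonoOn X).injOn

theorem rankIn_le_rankIn_iff {X : Finset α} {a b : α} (ha : a ∈ X) (hb : b ∈ X) :
    rankIn X a ≤ rankIn X b ↔ a ≤ b :=
  (rankIn_strictMonoOn X).le_iff_le ha hb

theorem rankIn_eq_card {X : Finset α} {a : α} (h : ∀ x ∈ X, x ≤ a) : rankIn X a = X.card := by
  rw [rankIn, Finset.filter_true_of_mem h]

theorem image_rankIn (X : Finset α) : X.image (rankIn X) = Finset.Icc 1 X.card := by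
  refine Finset.eq_of_subset_of_card_le (Finset.image_subset_iff.2 fun a ha => ?_) ?_
  · exact Finset.mem_Icc.2 ⟨Finset.card_pos.2 ⟨a, by simp [ha]⟩,
      Finset.card_le_card (Finset.filter_subset _ X)⟩
  · simp [Finset.card_image_of_injOn (rankIn_injOn X)]

theorem rankIn_mem_image_rankIn_iff {X Y : Finset α} (hYX : Y ⊆ X) {a : α} (ha : a ∈ X) :
    rankIn X a ∈ Y.image (rankIn X) ↔ a ∈ Y := by
  simpa using (rankIn_injOn X).mem_image_iff (Finset.coe_subset.2 hYX) ha

theorem rankIn_image_rankIn {X Y : Finset α} (hYX : Y ⊆ X) {a : α} (ha : a ∈ X) :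
    rankIn (Y.image (rankIn X)) (rankIn X a) = rankIn Y a := by
  have hfilter : Y.filter (rankIn X · ≤ rankIn X a) = Y.filter (· ≤ a) :=
    Finset.filter_congr fun y hy => rankIn_le_rankIn_iff (hYX hy) ha
  rw [rankIn, Finset.filter_image, hfilter, Finset.card_image_of_injOn, rankIn]
  exact (rankIn_injOn X).mono fun y hy => hYX (Finset.mem_of_mem_filter y hy)

theorem rankIn_Icc_one {k n : ℕ} (hkn : k ≤ n) : rankIn (Finset.Icc 1 n) k = k := by
  have hfilter : (Finset.Icc 1 n).filter (· ≤ k) = Finset.Icc 1 k := by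
    ext x
    simp only [Finset.mem_filter, Finset.mem_Icc]
    lia
  rw [rankIn, hfilter, Nat.card_Icc, Nat.add_sub_cancel]

theorem rankIn_add_one {X : Finset ℕ} {k : ℕ} (hk : k + 1 ∈ X) :
    rankIn X (k + 1) = rankIn X k + 1 := by
  have hfilter : X.filter (· ≤ k + 1) = insert (k + 1) (X.filter (· ≤ k)) := by
    ext x
    simp only [Finset.mem_filter, Finset.mem_insert]
    grind
  rw [rankIn, hfilter, Finset.card_insert_of_notMem (by simp), rankIn]

end RankIn

theorem image_inter_image_of_comp {α β γ : Type*} [DecidableEq α] [DecidableEq β] [DecidableEq γ]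
    {f : α → β} {g : β → γ} {h : α → γ} {X Y Z : Finset α} (hf : Set.InjOn f Y) (hZY : Z ⊆ Y)
    (hgf : ∀ a ∈ Z, g (f a) = h a) :
    ((X ∩ Y).image f ∩ Z.image f).image g = (X ∩ Z).image h := by
  have hinj : Set.InjOn f (↑(X ∩ Y) ∪ ↑Z) := hf.mono (by
    rw [← Finset.coe_union]
    exact Finset.coe_subset.2 (Finset.union_subset Finset.inter_subset_right hZY))
  rw [← Finset.image_inter_of_injOn _ _ hinj, Finset.inter_assoc,
    Finset.inter_eq_right.2 hZY, Finset.image_image]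
  exact Finset.image_congr fun a ha => hgf a (Finset.mem_of_mem_inter_right ha)

attribute [ext] BD

namespace BD

open Finset

variable {G : BD} {I A : Finset ℕ} {i k : ℕ}

/-- The partial sum `λ₁ + ⋯ + λ_i`, which is the label of the last half-edge of vertex `i`. -/
def partialSum (G : BD) (i : ℕ) : ℕ := (G.lam.take i).sum

theorem partialSum_zero (G : BD) : G.partialSum 0 = 0 := by simp [partialSum]

theorem partialSum_of_nv_le (h : G.nv ≤ i) : G.partialSum i = G.omega := by
  rw [partialSum, List.take_of_length_le h, omega]

theorem partialSum_succ (G : BD) (i : ℕ) :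
    G.partialSum (i + 1) = G.partialSum i + G.lam.getD i 0 := by
  rw [partialSum, partialSum, List.take_add_one, List.sum_append, List.getD_eq_getElem?_getD]
  cases G.lam[i]? <;> simp

theorem partialSum_mono (G : BD) : Monotone G.partialSum :=
  monotone_nat_of_le_succ fun i => by simp [partialSum_succ]

theorem v_eq_card (G : BD) (k : ℕ) :
    G.v k = #{i ∈ range G.nv | G.partialSum i < k} := by
  rw [v, List.countP_eq_length_filter]
  rfl

theorem lt_v_iff (hk : k ≤ G.omega) : i < G.v k ↔ G.partialSum i < k := by
  rw [v_eq_card]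
  refine ⟨fun hi => ?_, fun hi => ?_⟩
  · by_contra! hki
    have hsub : {j ∈ range G.nv | G.partialSum j < k} ⊆ range i := fun j hj =>
      mem_range.2 (G.partialSum_mono.reflect_lt ((mem_filter.1 hj).2.trans_le hki))
    exact hi.not_ge (by simpa using card_le_card hsub)
  · have hsub : range (i + 1) ⊆ {j ∈ range G.nv | G.partialSum j < k} := fun j hj => by
      have hjk : G.partialSum j < k :=
        (G.partialSum_mono (Nat.le_of_lt_succ (mem_range.1 hj))).trans_lt hi
      refine mem_filter.2 ⟨mem_range.2 (not_le.1 fun hnj => ?_), hjk⟩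
      exact (hjk.trans_le hk).ne (partialSum_of_nv_le hnj)
    simpa [Nat.add_one_le_iff] using card_le_card hsub

theorem v_eq_add_one_iff (hk : k ≤ G.omega) :
    G.v k = i + 1 ↔ G.partialSum i < k ∧ k ≤ G.partialSum (i + 1) := by
  rw [← lt_v_iff hk, ← not_lt, ← lt_v_iff hk]
  lia

theorem v_mem_Icc (hk : k ∈ Icc 1 G.omega) : G.v k ∈ Icc 1 G.nv := by
  obtain ⟨hk₁, hk₂⟩ := mem_Icc.1 hk
  rw [mem_Icc, Nat.one_le_iff_ne_zero, ← Nat.pos_iff_ne_zero, lt_v_iff hk₂, ← not_lt, lt_v_iff hk₂,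
    partialSum_zero, partialSum_of_nv_le le_rfl]
  lia

theorem mem_HI : k ∈ G.HI I ↔ k ∈ Icc 1 G.omega ∧ G.v k ∈ I := mem_filter

theorem HI_mono (h : A ⊆ I) : G.HI A ⊆ G.HI I :=
  monotone_filter_right _ fun _ _ hk => h hk

theorem HI_Icc_nv (G : BD) : G.HI (Icc 1 G.nv) = Icc 1 G.omega :=
  filter_true_of_mem fun _ => v_mem_Icc

theorem HI_singleton (G : BD) (i : ℕ) :
    G.HI {i + 1} = Ioc (G.partialSum i) (G.partialSum (i + 1)) := by
  have htop : G.partialSum (i + 1) ≤ G.omega :=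
    (G.partialSum_mono (le_max_left _ G.nv)).trans_eq (partialSum_of_nv_le (le_max_right _ _))
  ext k
  rw [mem_HI, mem_Icc, mem_singleton, mem_Ioc]
  refine ⟨fun ⟨hk, hv⟩ => (v_eq_add_one_iff hk.2).1 hv, fun h => ?_⟩
  have hk : k ≤ G.omega := h.2.trans htop
  exact ⟨⟨h.1.pos, hk⟩, (v_eq_add_one_iff hk).2 h⟩

theorem card_HI_singleton (G : BD) (i : ℕ) : #(G.HI {i + 1}) = G.lam.getD i 0 := by
  rw [HI_singleton, Nat.card_Ioc, partialSum_succ, Nat.add_sub_cancel_left]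

/-- The valences are the sizes of the fibres of `v`. -/
theorem lam_eq_of_v_eq {H : BD} (hnv : G.nv = H.nv) (homega : G.omega = H.omega)
    (hv : ∀ k ∈ Icc 1 G.omega, G.v k = H.v k) : G.lam = H.lam := by
  refine List.ext_getElem hnv fun i hG hH => ?_
  have hHI : G.HI {i + 1} = H.HI {i + 1} := by
    rw [HI, HI, ← homega]
    exact filter_congr fun k hk => by rw [hv k hk]
  rw [← List.getD_eq_getElem _ 0 hG, ← List.getD_eq_getElem _ 0 hH, ← card_HI_singleton,
    ← card_HI_singleton, hHI]

/-- The `0`-based positions in `λ` of the vertices `1, …, n` that lie in `I`. -/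
def positions (I : Finset ℕ) (n : ℕ) : List ℕ := (List.range n).filter (· + 1 ∈ I)

theorem nodup_positions (I : Finset ℕ) (n : ℕ) : (positions I n).Nodup :=
  List.nodup_range.filter _

theorem mem_positions {n : ℕ} : i ∈ positions I n ↔ i < n ∧ i + 1 ∈ I := by
  simp [positions]

theorem length_positions {n : ℕ} (hI : 0 ∉ I) : (positions I n).length = rankIn I n := by
  have himage : {i ∈ I | i ≤ n} = (positions I n).toFinset.image (· + 1) := by
    ext i
    cases i <;> simp [mem_positions, hI, and_comm]
  rw [rankIn, himage, card_image_of_injective _ (add_left_injective 1),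
    List.toFinset_card_of_nodup (nodup_positions I n)]

theorem take_positions {n : ℕ} (hI : 0 ∉ I) (hin : i ≤ n) :
    (positions I n).take (rankIn I i) = positions I i := by
  obtain ⟨m, rfl⟩ := Nat.exists_eq_add_of_le hin
  have happend : positions I (i + m) =
      positions I i ++ ((List.range m).map (i + ·)).filter (· + 1 ∈ I) := by
    rw [positions, List.range_add, List.filter_append, positions]
  rw [happend, List.take_left' (length_positions hI)]

theorem lam_sub (G : BD) (I : Finset ℕ) :
    (G.sub I).lam = (positions I G.nv).map (G.lam.getD · 0) := rfl

theorem nv_sub (hI : I ⊆ Icc 1 G.nv) : (G.sub I).nv = #I := by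
  have h0 : 0 ∉ I := fun h => by simpa using hI h
  rw [nv, lam_sub, List.length_map, length_positions h0,
    rankIn_eq_card fun i hi => (mem_Icc.1 (hI hi)).2]

theorem rankIn_HI_partialSum (G : BD) (I : Finset ℕ) (i : ℕ) :
    rankIn (G.HI I) (G.partialSum i) = ((positions I i).map (G.lam.getD · 0)).sum := by
  have hunion : {k ∈ G.HI I | k ≤ G.partialSum i} =
      (positions I i).toFinset.biUnion fun j => G.HI {j + 1} := by
    ext k
    simp only [mem_filter, mem_biUnion, List.mem_toFinset, mem_positions, mem_HI, mem_singleton]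
    refine ⟨fun ⟨⟨hk, hv⟩, hki⟩ => ?_, fun ⟨j, ⟨hji, hj⟩, hk, hv⟩ => ⟨⟨hk, hv ▸ hj⟩, ?_⟩⟩
    · have hvi : G.v k ≤ i := not_lt.1 (mt (lt_v_iff (mem_Icc.1 hk).2).1 hki.not_gt)
      have hv1 : G.v k - 1 + 1 = G.v k := Nat.sub_add_cancel (mem_Icc.1 (v_mem_Icc hk)).1
      exact ⟨G.v k - 1, ⟨by lia, hv1.symm ▸ hv⟩, hk, hv1.symm⟩
    · exact ((v_eq_add_one_iff (mem_Icc.1 hk).2).1 hv).2.trans (G.partialSum_mono hji)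
  have hdisj : ((positions I i).toFinset : Set ℕ).PairwiseDisjoint fun j => G.HI {j + 1} :=
    fun j _ j' _ hjj' => disjoint_left.2 fun k hk hk' => by
      simp only [mem_HI, mem_singleton] at hk hk'
      lia
  rw [rankIn, hunion, card_biUnion hdisj, ← List.sum_toFinset _ (nodup_positions I i)]
  exact sum_congr rfl fun j _ => card_HI_singleton G j

theorem omega_sub (G : BD) (I : Finset ℕ) : (G.sub I).omega = #(G.HI I) := by
  rw [omega, lam_sub, ← rankIn_HI_partialSum, partialSum_of_nv_le le_rfl,
    rankIn_eq_card fun k hk => (mem_Icc.1 (mem_HI.1 hk).1).2]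

theorem partialSum_sub (h0 : 0 ∉ I) (hi : i ≤ G.nv) :
    (G.sub I).partialSum (rankIn I i) = rankIn (G.HI I) (G.partialSum i) := by
  rw [partialSum, lam_sub, ← List.map_take, take_positions h0 hi, rankIn_HI_partialSum]

theorem phi_eq_rankIn (G : BD) (I : Finset ℕ) : G.phi I = rankIn (G.HI I) := rfl

theorem image_phi (G : BD) (I : Finset ℕ) :
    (G.HI I).image (G.phi I) = Icc 1 (G.sub I).omega := by
  rw [omega_sub, phi_eq_rankIn, image_rankIn]

theorem phi_mem_Icc (hk : k ∈ G.HI I) : G.phi I k ∈ Icc 1 (G.sub I).omega := by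
  rw [← image_phi]
  exact mem_image_of_mem _ hk

theorem v_sub_phi (hI : I ⊆ Icc 1 G.nv) (hk : k ∈ G.HI I) :
    (G.sub I).v (G.phi I k) = rankIn I (G.v k) := by
  have h0 : 0 ∉ I := fun h => by simpa using hI h
  obtain ⟨hkG, hvI⟩ := mem_HI.1 hk
  obtain ⟨hv1, hvn⟩ := mem_Icc.1 (hI hvI)
  obtain ⟨i, hi⟩ := Nat.exists_eq_add_of_le' hv1
  obtain ⟨hlt, hle⟩ := (v_eq_add_one_iff (mem_Icc.1 hkG).2).1 hi
  rw [hi] at hvI hvn ⊢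
  rw [rankIn_add_one hvI, v_eq_add_one_iff (mem_Icc.1 (phi_mem_Icc hk)).2, ← rankIn_add_one hvI,
    partialSum_sub h0 (by lia), partialSum_sub h0 hvn]
  exact ⟨rankIn_lt_rankIn hk hlt, rankIn_mono _ hle⟩

theorem phi_injOn (G : BD) (I : Finset ℕ) : Set.InjOn (G.phi I) (G.HI I) := rankIn_injOn _

theorem Valid.mem_Icc_of_mem_ed (hG : G.Valid) {p : ℕ × ℕ} (hp : p ∈ G.ed) :
    p.1 ∈ Icc 1 G.omega ∧ p.2 ∈ Icc 1 G.omega :=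
  have ⟨_, hup, hdn, hed, _⟩ := hG
  ⟨hup (hed p hp).1, hdn (hed p hp).2.1⟩

theorem ed_sub (hG : G.Valid) (I : Finset ℕ) :
    (G.sub I).ed = (G.ed ∩ G.HI I ×ˢ G.HI I).image (Prod.map (G.phi I) (G.phi I)) := by
  have hfilter : {p ∈ G.ed | G.v p.1 ∈ I ∧ G.v p.2 ∈ I} = G.ed ∩ G.HI I ×ˢ G.HI I := by
    ext p
    simp only [mem_filter, mem_inter, mem_product, mem_HI]
    have := hG.mem_Icc_of_mem_ed (p := p)
    tauto
  rw [← hfilter]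
  rfl

theorem mem_ed_sub (hG : G.Valid) {p : ℕ × ℕ} :
    p ∈ (G.sub I).ed ↔
      ∃ q ∈ G.ed, q.1 ∈ G.HI I ∧ q.2 ∈ G.HI I ∧ (G.phi I q.1, G.phi I q.2) = p := by
  simp [ed_sub hG, and_assoc]

theorem valid_sub (hG : G.Valid) (hI : I ⊆ Icc 1 G.nv) : (G.sub I).Valid := by
  have ⟨hpos, _, _, hed, hinj₁, hinj₂⟩ := hG
  have himage (X : Finset ℕ) : (X ∩ G.HI I).image (G.phi I) ⊆ Icc 1 (G.sub I).omega :=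
    image_subset_iff.2 fun k hk => phi_mem_Icc (mem_of_mem_inter_right hk)
  refine ⟨fun x hx => ?_, himage G.up, himage G.dn, fun p hp => ?_, fun p hp q hq hpq => ?_,
    fun p hp q hq hpq => ?_⟩
  · obtain ⟨i, hi, rfl⟩ := List.mem_map.1 (lam_sub G I ▸ hx)
    have hilam : i < G.lam.length := (mem_positions.1 hi).1
    rw [List.getD_eq_getElem _ _ hilam]
    exact hpos _ (List.getElem_mem hilam)
  · obtain ⟨q, hq, hq₁, hq₂, rfl⟩ := (mem_ed_sub hG).1 hp
    obtain ⟨hup, hdn, hlt⟩ := hed q hq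
    refine ⟨mem_image_of_mem _ (mem_inter.2 ⟨hup, hq₁⟩),
      mem_image_of_mem _ (mem_inter.2 ⟨hdn, hq₂⟩), ?_⟩
    rw [v_sub_phi hI hq₁, v_sub_phi hI hq₂]
    exact rankIn_lt_rankIn (mem_HI.1 hq₂).2 hlt
  · obtain ⟨p', hp', hp₁, -, rfl⟩ := (mem_ed_sub hG).1 hp
    obtain ⟨q', hq', hq₁, -, rfl⟩ := (mem_ed_sub hG).1 hq
    rw [hinj₁ p' hp' q' hq' (G.phi_injOn I hp₁ hq₁ hpq)]
  · obtain ⟨p', hp', -, hp₂, rfl⟩ := (mem_ed_sub hG).1 hp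
    obtain ⟨q', hq', -, hq₂, rfl⟩ := (mem_ed_sub hG).1 hq
    rw [hinj₂ p' hp' q' hq' (G.phi_injOn I hp₂ hq₂ hpq)]

theorem image_rankIn_subset_Icc_nv_sub (hI : I ⊆ Icc 1 G.nv) (hAI : A ⊆ I) :
    A.image (rankIn I) ⊆ Icc 1 (G.sub I).nv := by
  rw [nv_sub hI, ← image_rankIn]
  exact image_subset_image hAI

theorem HI_sub_image (hI : I ⊆ Icc 1 G.nv) (hAI : A ⊆ I) :
    (G.sub I).HI (A.image (rankIn I)) = (G.HI A).image (G.phi I) := by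
  rw [HI, ← image_phi, filter_image]
  congr 1
  ext k
  rw [mem_filter]
  refine ⟨fun ⟨hk, hvk⟩ => ?_, fun hk => ⟨HI_mono hAI hk, ?_⟩⟩
  · obtain ⟨hkG, hvI⟩ := mem_HI.1 hk
    rw [v_sub_phi hI hk, rankIn_mem_image_rankIn_iff hAI hvI] at hvk
    exact mem_HI.2 ⟨hkG, hvk⟩
  · rw [v_sub_phi hI (HI_mono hAI hk)]
    exact mem_image_of_mem _ (mem_HI.1 hk).2

theorem phi_sub_phi (hI : I ⊆ Icc 1 G.nv) (hAI : A ⊆ I) (hk : k ∈ G.HI A) :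
    (G.sub I).phi (A.image (rankIn I)) (G.phi I k) = G.phi A k := by
  rw [phi_eq_rankIn, HI_sub_image hI hAI]
  exact rankIn_image_rankIn (HI_mono hAI) (HI_mono hAI hk)

theorem lam_sub_sub (hI : I ⊆ Icc 1 G.nv) (hAI : A ⊆ I) :
    ((G.sub I).sub (A.image (rankIn I))).lam = (G.sub A).lam := by
  have hA' := image_rankIn_subset_Icc_nv_sub hI hAI
  have homega : ((G.sub I).sub (A.image (rankIn I))).omega = (G.sub A).omega := by
    rw [omega_sub, omega_sub, HI_sub_image hI hAI,
      card_image_of_injOn ((G.phi_injOn I).mono (coe_subset.2 (HI_mono hAI)))]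
  refine lam_eq_of_v_eq ?_ homega fun k hk => ?_
  · rw [nv_sub hA', nv_sub (hAI.trans hI),
      card_image_of_injOn ((rankIn_injOn I).mono (coe_subset.2 hAI))]
  · rw [homega, ← image_phi] at hk
    obtain ⟨j, hj, rfl⟩ := mem_image.1 hk
    have hjI : j ∈ G.HI I := HI_mono hAI hj
    have hj' : G.phi I j ∈ (G.sub I).HI (A.image (rankIn I)) := by
      rw [HI_sub_image hI hAI]
      exact mem_image_of_mem _ hj
    rw [v_sub_phi (hAI.trans hI) hj, ← phi_sub_phi hI hAI hj, v_sub_phi hA' hj', v_sub_phi hI hjI,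
      rankIn_image_rankIn hAI (mem_HI.1 hjI).2]

theorem sub_sub (hG : G.Valid) (hI : I ⊆ Icc 1 G.nv) (hAI : A ⊆ I) :
    (G.sub I).sub (A.image (rankIn I)) = G.sub A := by
  have himage (X : Finset ℕ) :
      ((X ∩ G.HI I).image (G.phi I) ∩ (G.sub I).HI (A.image (rankIn I))).image
        ((G.sub I).phi (A.image (rankIn I))) = (X ∩ G.HI A).image (G.phi A) := by
    rw [HI_sub_image hI hAI]
    exact image_inter_image_of_comp (G.phi_injOn I) (HI_mono hAI) fun _ => phi_sub_phi hI hAI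
  refine BD.ext (lam_sub_sub hI hAI) (himage G.up) (himage G.dn) ?_
  rw [ed_sub (valid_sub hG hI), ed_sub hG, ed_sub hG, HI_sub_image hI hAI,
    ← prodMap_image_product]
  refine image_inter_image_of_comp ?_ (product_subset_product (HI_mono hAI) (HI_mono hAI))
    fun p hp => Prod.ext (phi_sub_phi hI hAI (mem_product.1 hp).1)
      (phi_sub_phi hI hAI (mem_product.1 hp).2)
  rw [coe_product]
  exact (G.phi_injOn I).prodMap (G.phi_injOn I)

theorem phi_Icc_nv (hk : k ∈ Icc 1 G.omega) : G.phi (Icc 1 G.nv) k = k := by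
  rw [phi_eq_rankIn, HI_Icc_nv, rankIn_Icc_one (mem_Icc.1 hk).2]

theorem omega_sub_Icc_nv (G : BD) : (G.sub (Icc 1 G.nv)).omega = G.omega := by
  rw [omega_sub, HI_Icc_nv, Nat.card_Icc, Nat.add_sub_cancel]

theorem lam_sub_Icc_nv (G : BD) : (G.sub (Icc 1 G.nv)).lam = G.lam := by
  refine lam_eq_of_v_eq (by rw [nv_sub subset_rfl, Nat.card_Icc, Nat.add_sub_cancel])
    (omega_sub_Icc_nv G) fun k hk => ?_
  rw [omega_sub_Icc_nv] at hk
  calc (G.sub (Icc 1 G.nv)).v k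
      = (G.sub (Icc 1 G.nv)).v (G.phi (Icc 1 G.nv) k) := by rw [phi_Icc_nv hk]
    _ = rankIn (Icc 1 G.nv) (G.v k) := v_sub_phi subset_rfl (by rwa [HI_Icc_nv])
    _ = G.v k := rankIn_Icc_one (mem_Icc.1 (v_mem_Icc hk)).2

theorem sub_Icc_nv (hG : G.Valid) : G.sub (Icc 1 G.nv) = G := by
  have ⟨_, hup, hdn, _⟩ := hG
  have himage {X : Finset ℕ} (hX : X ⊆ Icc 1 G.omega) :
      (X ∩ G.HI (Icc 1 G.nv)).image (G.phi (Icc 1 G.nv)) = X := by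
    rw [HI_Icc_nv, inter_eq_left.2 hX]
    exact (image_congr fun k hk => phi_Icc_nv (hX hk)).trans image_id
  refine BD.ext (lam_sub_Icc_nv G) (himage hup) (himage hdn) ?_
  have hed : G.ed ⊆ Icc 1 G.omega ×ˢ Icc 1 G.omega :=
    fun p hp => mem_product.2 (hG.mem_Icc_of_mem_ed hp)
  rw [ed_sub hG, HI_Icc_nv, inter_eq_left.2 hed]
  refine (image_congr fun p hp => ?_).trans image_id
  have ⟨hp₁, hp₂⟩ := hG.mem_Icc_of_mem_ed hp
  exact Prod.ext (phi_Icc_nv hp₁) (phi_Icc_nv hp₂)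

theorem eq_eps_of_omega_eq_zero (hG : G.Valid) (h : G.omega = 0) : G = eps := by
  have ⟨hpos, hup, hdn, _⟩ := hG
  have hlam : G.lam = [] := List.eq_nil_iff_forall_not_mem.2 fun x hx =>
    (hpos x hx).ne' (List.sum_eq_zero_iff.1 h x hx)
  have hed : G.ed = ∅ := eq_empty_of_forall_notMem fun p hp => by
    simpa [h] using (hG.mem_Icc_of_mem_ed hp).1
  rw [h, Icc_eq_empty (by simp), subset_empty] at hup hdn
  exact BD.ext hlam hup hdn hed

theorem sub_eq_eps_iff (hG : G.Valid) (hI : I ⊆ Icc 1 G.nv) : G.sub I = eps ↔ I = ∅ := by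
  refine ⟨fun h => ?_, fun h => eq_eps_of_omega_eq_zero (valid_sub hG hI) ?_⟩
  · rw [← card_eq_zero, ← nv_sub hI, h]
    rfl
  · simp [omega_sub, HI, h]

theorem omega_sub_add_omega_sub_compl (G : BD) (I : Finset ℕ) :
    (G.sub I).omega + (G.sub (Icc 1 G.nv \ I)).omega = G.omega := by
  have hcompl : G.HI (Icc 1 G.nv \ I) = {k ∈ Icc 1 G.omega | G.v k ∉ I} :=
    filter_congr fun k hk => by simp only [mem_sdiff, v_mem_Icc hk, true_and]
  rw [omega_sub, omega_sub, hcompl, HI, card_filter_add_card_filter_not, Nat.card_Icc,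
    Nat.add_sub_cancel]

theorem isolated_empty (G : BD) : G.Isolated ∅ := fun _ _ => by simp

theorem isolated_Icc_nv (hG : G.Valid) : G.Isolated (Icc 1 G.nv) := fun _ hp =>
  have ⟨hp₁, hp₂⟩ := hG.mem_Icc_of_mem_ed hp
  iff_of_true (v_mem_Icc hp₁) (v_mem_Icc hp₂)

theorem Isolated.sdiff (hI : G.Isolated I) (hA : G.Isolated A) : G.Isolated (I \ A) :=
  fun p hp => by rw [mem_sdiff, mem_sdiff, hI p hp, hA p hp]

theorem Isolated.union (hI : G.Isolated I) (hA : G.Isolated A) : G.Isolated (I ∪ A) :=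
  fun p hp => by rw [mem_union, mem_union, hI p hp, hA p hp]

theorem isolated_sub_iff (hG : G.Valid) (hI : I ⊆ Icc 1 G.nv) (hiso : G.Isolated I) (hAI : A ⊆ I) :
    (G.sub I).Isolated (A.image (rankIn I)) ↔ G.Isolated A := by
  have hv {k : ℕ} (hk : k ∈ G.HI I) :
      (G.sub I).v (G.phi I k) ∈ A.image (rankIn I) ↔ G.v k ∈ A := by
    rw [v_sub_phi hI hk, rankIn_mem_image_rankIn_iff hAI (mem_HI.1 hk).2]
  refine ⟨fun h p hp => ?_, fun h p hp => ?_⟩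
  · by_cases hpI : G.v p.1 ∈ I
    · have hp₁ : p.1 ∈ G.HI I := mem_HI.2 ⟨(hG.mem_Icc_of_mem_ed hp).1, hpI⟩
      have hp₂ : p.2 ∈ G.HI I := mem_HI.2 ⟨(hG.mem_Icc_of_mem_ed hp).2, (hiso p hp).1 hpI⟩
      rw [← hv hp₁, ← hv hp₂]
      exact h _ ((mem_ed_sub hG).2 ⟨p, hp, hp₁, hp₂, rfl⟩)
    · exact iff_of_false (fun hA => hpI (hAI hA)) fun hA => hpI ((hiso p hp).2 (hAI hA))
  · obtain ⟨q, hq, hq₁, hq₂, rfl⟩ := (mem_ed_sub hG).1 hp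
    rw [hv hq₁, hv hq₂]
    exact h q hq

open scoped Classical in
/-- The subsets of `K` isolated in `G`: with `K` the set of all vertices they index the coproduct
of `G`, and for `K` isolated in `G` they correspond to the isolated sets of `G[K]`. -/
noncomputable def isolatedSubsets (G : BD) (K : Finset ℕ) : Finset (Finset ℕ) :=
  K.powerset.filter G.Isolated

theorem mem_isolatedSubsets {K : Finset ℕ} : I ∈ G.isolatedSubsets K ↔ I ⊆ K ∧ G.Isolated I := by
  simp [isolatedSubsets]

open scoped Classical in
theorem isolatedSubsets_sub (hG : G.Valid) (hI : I ⊆ Icc 1 G.nv) (hiso : G.Isolated I) :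
    (G.sub I).isolatedSubsets (Icc 1 (G.sub I).nv) =
      (G.isolatedSubsets I).image (image (rankIn I)) := by
  rw [isolatedSubsets, nv_sub hI, ← image_rankIn, powerset_image, filter_image, isolatedSubsets]
  congr 1
  exact filter_congr fun A hA => isolated_sub_iff hG hI hiso (mem_powerset.1 hA)

theorem sum_isolatedSubsets_sub {M : Type*} [AddCommMonoid M] (hG : G.Valid)
    (hI : I ⊆ Icc 1 G.nv) (hiso : G.Isolated I) (F : BD → BD → M) :
    ∑ J ∈ (G.sub I).isolatedSubsets (Icc 1 (G.sub I).nv),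
        F ((G.sub I).sub J) ((G.sub I).sub (Icc 1 (G.sub I).nv \ J)) =
      ∑ A ∈ G.isolatedSubsets I, F (G.sub A) (G.sub (I \ A)) := by
  have hinj : Set.InjOn (image (rankIn I)) (G.isolatedSubsets I) :=
    (image_injOn_powerset_of_injOn (rankIn_injOn I)).mono fun A hA =>
      mem_powerset.2 (mem_isolatedSubsets.1 hA).1
  rw [isolatedSubsets_sub hG hI hiso, sum_image hinj]
  refine sum_congr rfl fun A hA => ?_
  have hAI : A ⊆ I := (mem_isolatedSubsets.1 hA).1
  rw [nv_sub hI, ← image_rankIn, ← image_sdiff_of_injOn (rankIn_injOn I) hAI,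
    sub_sub hG hI hAI, sub_sub hG hI sdiff_subset]

theorem sum_isolatedSubsets_compl {M : Type*} [AddCommMonoid M] {K : Finset ℕ}
    (hK : G.Isolated K) (F : Finset ℕ → Finset ℕ → M) :
    ∑ I ∈ G.isolatedSubsets K, F (K \ I) I = ∑ I ∈ G.isolatedSubsets K, F I (K \ I) := by
  have hcompl : ∀ I ∈ G.isolatedSubsets K, K \ I ∈ G.isolatedSubsets K := fun I hI =>
    mem_isolatedSubsets.2 ⟨sdiff_subset, hK.sdiff (mem_isolatedSubsets.1 hI).2⟩
  have hinvol : ∀ I ∈ G.isolatedSubsets K, K \ (K \ I) = I := fun I hI =>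
    Finset.sdiff_sdiff_eq_self (mem_isolatedSubsets.1 hI).1
  exact sum_bij' (fun I _ => K \ I) (fun I _ => K \ I) hcompl hcompl hinvol hinvol
    fun I hI => by rw [hinvol I hI]

/-- Both sides run over the ordered partitions of `K` into three isolated sets. -/
theorem sum_isolatedSubsets_assoc {M : Type*} [AddCommMonoid M] (G : BD) (K : Finset ℕ)
    (F : Finset ℕ → Finset ℕ → Finset ℕ → M) :
    ∑ I ∈ G.isolatedSubsets K, ∑ A ∈ G.isolatedSubsets I, F A (I \ A) (K \ I) =
      ∑ A ∈ G.isolatedSubsets K, ∑ B ∈ G.isolatedSubsets (K \ A), F A B ((K \ A) \ B) := by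
  rw [sum_sigma', sum_sigma']
  refine sum_bij' (fun x _ => ⟨x.2, x.1 \ x.2⟩) (fun x _ => ⟨x.1 ∪ x.2, x.1⟩) ?_ ?_ ?_ ?_ ?_ <;>
    rintro ⟨I, A⟩ h <;> simp only [mem_sigma, mem_isolatedSubsets] at h ⊢ <;>
    obtain ⟨⟨hIK, hI⟩, hA', hA⟩ := h
  · exact ⟨⟨hA'.trans hIK, hA⟩, sdiff_subset_sdiff hIK subset_rfl, hI.sdiff hA⟩
  · exact ⟨⟨union_subset hIK (hA'.trans sdiff_subset), hI.union hA⟩, subset_union_left, hI⟩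
  · rw [union_sdiff_of_subset hA']
  · rw [union_sdiff_cancel_left (subset_sdiff.1 hA').2.symm]
  · rw [sdiff_sdiff_left, sup_eq_union, union_sdiff_of_subset hA']

end BD

section Coalgebra

open BD Finset

theorem mkB_of_valid {G : BD} (hG : G.Valid) : mkB G = Finsupp.single ⟨G, hG⟩ 1 := dif_pos hG

theorem liftB_mkB {V : Type*} [AddCommMonoid V] [Module ℂ V] (f : BDiagram → V) {G : BD}
    (hG : G.Valid) : liftB f (mkB G) = f ⟨G, hG⟩ := by
  simp [liftB, mkB_of_valid hG]

theorem bspace_hom_ext {V : Type*} [AddCommMonoid V] [Module ℂ V] {f g : BSpace →ₗ[ℂ] V}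
    (h : ∀ G : BD, G.Valid → f (mkB G) = g (mkB G)) : f = g :=
  Finsupp.lhom_ext' fun ⟨G, hG⟩ => LinearMap.ext_ring <| by simpa [mkB_of_valid hG] using h G hG

theorem deltaL_mkB {G : BD} (hG : G.Valid) :
    deltaL (mkB G) = ∑ I ∈ G.isolatedSubsets (Icc 1 G.nv),
      mkB (G.sub I) ⊗ₜ[ℂ] mkB (G.sub (Icc 1 G.nv \ I)) :=
  liftB_mkB dfun hG

theorem deltaL_mkB_sub {G : BD} {I : Finset ℕ} (hG : G.Valid)
    (hI : I ∈ G.isolatedSubsets (Icc 1 G.nv)) :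
    deltaL (mkB (G.sub I)) =
      ∑ A ∈ G.isolatedSubsets I, mkB (G.sub A) ⊗ₜ[ℂ] mkB (G.sub (I \ A)) := by
  obtain ⟨hIG, hiso⟩ := mem_isolatedSubsets.1 hI
  rw [deltaL_mkB (valid_sub hG hIG)]
  exact sum_isolatedSubsets_sub hG hIG hiso fun H H' => mkB H ⊗ₜ[ℂ] mkB H'

theorem counitB_mkB_sub {G : BD} {I : Finset ℕ} (hG : G.Valid) (hI : I ⊆ Icc 1 G.nv) :
    counitB (mkB (G.sub I)) = if I = ∅ then 1 else 0 := by
  rw [counitB, liftB_mkB _ (valid_sub hG hI)]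
  simp only [sub_eq_eps_iff hG hI]

theorem deltaL_coassoc :
    (TensorProduct.assoc ℂ BSpace BSpace BSpace).toLinearMap ∘ₗ
        TensorProduct.map deltaL LinearMap.id ∘ₗ deltaL =
      TensorProduct.map LinearMap.id deltaL ∘ₗ deltaL := by
  refine bspace_hom_ext fun G hG => ?_
  have hcompl {I : Finset ℕ} (hI : I ∈ G.isolatedSubsets (Icc 1 G.nv)) :
      Icc 1 G.nv \ I ∈ G.isolatedSubsets (Icc 1 G.nv) :=
    mem_isolatedSubsets.2 ⟨sdiff_subset, (isolated_Icc_nv hG).sdiff (mem_isolatedSubsets.1 hI).2⟩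
  simp only [LinearMap.comp_apply, LinearEquiv.coe_coe, deltaL_mkB hG, map_sum,
    TensorProduct.map_tmul, LinearMap.id_apply]
  calc ∑ I ∈ G.isolatedSubsets (Icc 1 G.nv), TensorProduct.assoc ℂ BSpace BSpace BSpace
        (deltaL (mkB (G.sub I)) ⊗ₜ mkB (G.sub (Icc 1 G.nv \ I)))
      = ∑ I ∈ G.isolatedSubsets (Icc 1 G.nv), ∑ A ∈ G.isolatedSubsets I,
          mkB (G.sub A) ⊗ₜ (mkB (G.sub (I \ A)) ⊗ₜ mkB (G.sub (Icc 1 G.nv \ I))) :=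
        sum_congr rfl fun I hI => by
          simp only [deltaL_mkB_sub hG hI, TensorProduct.sum_tmul, map_sum,
            TensorProduct.assoc_tmul]
    _ = ∑ A ∈ G.isolatedSubsets (Icc 1 G.nv), ∑ B ∈ G.isolatedSubsets (Icc 1 G.nv \ A),
          mkB (G.sub A) ⊗ₜ (mkB (G.sub B) ⊗ₜ mkB (G.sub ((Icc 1 G.nv \ A) \ B))) :=
        G.sum_isolatedSubsets_assoc _ fun A B C =>
          mkB (G.sub A) ⊗ₜ (mkB (G.sub B) ⊗ₜ mkB (G.sub C))
    _ = ∑ A ∈ G.isolatedSubsets (Icc 1 G.nv),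
          mkB (G.sub A) ⊗ₜ deltaL (mkB (G.sub (Icc 1 G.nv \ A))) :=
        sum_congr rfl fun A hA => by
          rw [deltaL_mkB_sub hG (hcompl hA), TensorProduct.tmul_sum]

theorem comm_deltaL (x : BSpace) :
    TensorProduct.comm ℂ BSpace BSpace (deltaL x) = deltaL x := by
  suffices h : (TensorProduct.comm ℂ BSpace BSpace).toLinearMap ∘ₗ deltaL = deltaL from
    LinearMap.congr_fun h x
  refine bspace_hom_ext fun G hG => ?_
  simp only [LinearMap.comp_apply, LinearEquiv.coe_coe, deltaL_mkB hG, map_sum,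
    TensorProduct.comm_tmul]
  exact sum_isolatedSubsets_compl (isolated_Icc_nv hG) fun I J =>
    mkB (G.sub I) ⊗ₜ[ℂ] mkB (G.sub J)

theorem lid_counitB_deltaL :
    (TensorProduct.lid ℂ BSpace).toLinearMap ∘ₗ
        TensorProduct.map counitB LinearMap.id ∘ₗ deltaL = LinearMap.id := by
  refine bspace_hom_ext fun G hG => ?_
  have hempty : ∅ ∈ G.isolatedSubsets (Icc 1 G.nv) :=
    mem_isolatedSubsets.2 ⟨empty_subset _, isolated_empty G⟩
  simp only [LinearMap.comp_apply, LinearEquiv.coe_coe, deltaL_mkB hG, map_sum,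
    TensorProduct.map_tmul, LinearMap.id_apply, TensorProduct.lid_tmul]
  calc ∑ I ∈ G.isolatedSubsets (Icc 1 G.nv),
        counitB (mkB (G.sub I)) • mkB (G.sub (Icc 1 G.nv \ I))
      = ∑ I ∈ G.isolatedSubsets (Icc 1 G.nv),
          if I = ∅ then mkB (G.sub (Icc 1 G.nv \ I)) else 0 :=
        sum_congr rfl fun I hI => by
          rw [counitB_mkB_sub hG (mem_isolatedSubsets.1 hI).1, ite_smul, one_smul, zero_smul]
    _ = mkB (G.sub (Icc 1 G.nv \ ∅)) := by rw [sum_ite_eq', if_pos hempty]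
    _ = mkB G := by rw [sdiff_empty, sub_Icc_nv hG]

theorem rid_counitB_deltaL :
    (TensorProduct.rid ℂ BSpace).toLinearMap ∘ₗ
        TensorProduct.map LinearMap.id counitB ∘ₗ deltaL = LinearMap.id := by
  refine Eq.trans (LinearMap.ext fun x => ?_) lid_counitB_deltaL
  calc TensorProduct.rid ℂ BSpace (TensorProduct.map LinearMap.id counitB (deltaL x))
      = TensorProduct.lid ℂ BSpace (TensorProduct.map counitB LinearMap.id
          (TensorProduct.comm ℂ BSpace BSpace (deltaL x))) := by
        rw [TensorProduct.map_comm, TensorProduct.lid_comm]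
    _ = TensorProduct.lid ℂ BSpace (TensorProduct.map counitB LinearMap.id (deltaL x)) := by
        rw [comm_deltaL]

end Coalgebra

/-- `(ℬ, Δ, ε*)` is a graded connected cocommutative coassociative
coalgebra. -/
theorem bspace_coalgebra :
    ((TensorProduct.assoc ℂ BSpace BSpace BSpace).toLinearMap ∘ₗ
        TensorProduct.map deltaL LinearMap.id ∘ₗ deltaL =
      TensorProduct.map LinearMap.id deltaL ∘ₗ deltaL) ∧
    (∀ x : BSpace, TensorProduct.comm ℂ BSpace BSpace (deltaL x) = deltaL x) ∧
    ((TensorProduct.lid ℂ BSpace).toLinearMap ∘ₗ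
        TensorProduct.map counitB LinearMap.id ∘ₗ deltaL = LinearMap.id) ∧
    ((TensorProduct.rid ℂ BSpace).toLinearMap ∘ₗ
        TensorProduct.map LinearMap.id counitB ∘ₗ deltaL = LinearMap.id) ∧
    (∀ A : BDiagram, A.1.omega = 0 → A.1 = BD.eps) ∧
    (∀ A : BDiagram, ∀ I ⊆ Finset.Icc 1 A.1.nv, A.1.Isolated I →
      (A.1.sub I).omega + (A.1.sub (Finset.Icc 1 A.1.nv \ I)).omega = A.1.omega) :=
  ⟨deltaL_coassoc, comm_deltaL, lid_counitB_deltaL, rid_counitB_deltaL,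
    fun A => BD.eq_eps_of_omega_eq_zero A.2, fun A I _ _ => BD.omega_sub_add_omega_sub_compl A.1 I⟩
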